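/- Let N, M ∈ ℕ, let G be an N×N complex matrix, let G̃ be an M×N complex matrix, let u_in ∈ ℂ^N and y ∈ ℂ^M. For f ∈ ℝ^N with I − G·diag(f) invertible, set u(f) = (I − G·diag(f))⁻¹ u_in, h(f) = diag(f)·u(f), and define the data-fidelity D(f) = (1/2)·‖G̃·h(f) − y‖₂². Then at any such f, the function D : ℝ^N → ℝ is differentiable, and its gradient is ∇D(f) = Re( J_h(f)^H · G̃^H · (G̃·diag(f)·u(f) − y) ), where J_h(f) = (I + diag(f)·(I − G·diag(f))⁻¹·G)·diag(u(f)) and ^H denotes the conjugate transpose. -/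

import Mathlib

open Matrix

/-- `diagC f` : the N×N complex diagonal matrix with the (real) entries of `f`
on the diagonal. -/
noncomputable def diagC {N : ℕ} (f : Fin N → ℝ) : Matrix (Fin N) (Fin N) ℂ :=
  Matrix.diagonal fun i => (f i : ℂ)

/-- The total field `u(f) = (I − G·diag(f))⁻¹ u_in` of the discrete
Lippmann–Schwinger equation. -/
noncomputable def totalField {N : ℕ} (G : Matrix (Fin N) (Fin N) ℂ)
    (uin : Fin N → ℂ) (f : Fin N → ℝ) : Fin N → ℂ :=
  (1 - G * diagC f)⁻¹ *ᵥ uin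

/-- `h(f) = diag(f)·u(f)`. -/
noncomputable def hMap {N : ℕ} (G : Matrix (Fin N) (Fin N) ℂ)
    (uin : Fin N → ℂ) (f : Fin N → ℝ) : Fin N → ℂ :=
  diagC f *ᵥ totalField G uin f

/-- The data-fidelity term `D(f) = (1/2)·‖G̃·h(f) − y‖₂²`. -/
noncomputable def dataFid {N M : ℕ} (G : Matrix (Fin N) (Fin N) ℂ)
    (Gt : Matrix (Fin M) (Fin N) ℂ) (uin : Fin N → ℂ) (y : Fin M → ℂ)
    (f : Fin N → ℝ) : ℝ :=
  (1 / 2) * ∑ m, Complex.normSq ((Gt *ᵥ hMap G uin f - y) m)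

/-- The Jacobian matrix `J_h(f) = (I + diag(f)·(I − G·diag(f))⁻¹·G)·diag(u(f))`. -/
noncomputable def jacH {N : ℕ} (G : Matrix (Fin N) (Fin N) ℂ)
    (uin : Fin N → ℂ) (f : Fin N → ℝ) : Matrix (Fin N) (Fin N) ℂ :=
  (1 + diagC f * (1 - G * diagC f)⁻¹ * G) * Matrix.diagonal (totalField G uin f)

/-! With `A = (1 - G W)⁻¹`, the derivative of `W ↦ W (1 - G W)⁻¹` in the direction `V` is
`V A + W A G V A = (1 + W A G) V A`. For `W = diag f` and `V = diag v`, applying this to `u_in`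
gives `(1 + W A G) diag(v) u(f)`, and `diag(v) u(f) = diag(u(f)) v` identifies it as `J_h(f) v`.
The gradient follows by moving `G̃ J_h(f)` across the real inner product `Re ⟪r, G̃ J_h(f) v⟫`. -/

section NormedAlgebra

open scoped Ring

variable {𝕜 R : Type*} [NontriviallyNormedField 𝕜] [NormedRing R] [HasSummableGeomSeries R]
  [NormedAlgebra 𝕜 R]

theorem hasFDerivAt_mul_inverse_one_sub_mul {g w : R} (h : IsUnit (1 - g * w)) :
    HasFDerivAt (fun x => x * (1 - g * x)⁻¹ʳ)
      (ContinuousLinearMap.mulLeftRight 𝕜 R (1 + w * (1 - g * w)⁻¹ʳ * g) (1 - g * w)⁻¹ʳ) w := by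
  obtain ⟨a, ha⟩ := h
  have hlin : HasFDerivAt (fun x => 1 - g * x) (-(g • ContinuousLinearMap.id 𝕜 R)) w :=
    ((hasFDerivAt_id w).const_mul g).const_sub 1
  have hinv : HasFDerivAt (Ring.inverse : R → R)
      (-ContinuousLinearMap.mulLeftRight 𝕜 R ↑a⁻¹ ↑a⁻¹) (1 - g * w) :=
    ha ▸ hasFDerivAt_ringInverse a
  refine ((hasFDerivAt_id w).mul' (hinv.comp w hlin)).congr_fderiv ?_
  ext v
  suffices w * (↑a⁻¹ * (g * v) * ↑a⁻¹) + v * ↑a⁻¹ = (1 + w * ↑a⁻¹ * g) * v * ↑a⁻¹ by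
    simpa [← ha, add_mul] using this
  noncomm_ring

end NormedAlgebra

section LeastSquares

variable {ι E V : Type*} [Fintype ι] [NormedAddCommGroup E] [NormedSpace ℝ E]
  [NormedAddCommGroup V] [InnerProductSpace ℝ V]

theorem hasFDerivAt_half_sum_norm_sq {F : E → ι → V} {F' : E →L[ℝ] (ι → V)} {x : E}
    (hF : HasFDerivAt F F' x) :
    HasFDerivAt (fun z => (1 / 2) * ∑ i, ‖F z i‖ ^ 2)
      (∑ i, innerSL ℝ (F x i) ∘L ContinuousLinearMap.proj i ∘L F') x := by
  have hsum := (HasFDerivAt.fun_sum (u := Finset.univ) fun i _ =>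
    (hasFDerivAt_pi'.1 hF i).norm_sq).const_mul (1 / 2 : ℝ)
  refine hsum.congr_fderiv ?_
  rw [← Finset.smul_sum, ← Nat.cast_smul_eq_nsmul ℝ, smul_smul]
  norm_num

end LeastSquares

section RealMulVec

variable {l m n : Type*} [Fintype n]

/-- The real-linear map `v ↦ A v` from real to complex vectors. A complex Jacobian `A` represents
the Fréchet derivative of a `ℂᵐ`-valued function of real variables in this form. -/
noncomputable def realMulVecCLM (A : Matrix m n ℂ) : (n → ℝ) →L[ℝ] (m → ℂ) :=
  (A.mulVecLin.restrictScalars ℝ ∘ₗ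
    Complex.ofRealCLM.toLinearMap.compLeft n).toContinuousLinearMap

theorem realMulVecCLM_apply (A : Matrix m n ℂ) (v : n → ℝ) :
    realMulVecCLM A v = A *ᵥ fun j => (v j : ℂ) :=
  rfl

variable [Fintype m]

theorem hasFDerivAt_mulVec_sub_const [Finite l] {F : (n → ℝ) → m → ℂ} {J : Matrix m n ℂ}
    {x : n → ℝ} (hF : HasFDerivAt F (realMulVecCLM J) x) (B : Matrix l m ℂ) (y : l → ℂ) :
    HasFDerivAt (fun z => B *ᵥ F z - y) (realMulVecCLM (B * J)) x := by
  have := Fintype.ofFinite l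
  let mulVecCLM : (m → ℂ) →L[ℝ] (l → ℂ) :=
    (B.mulVecLin.restrictScalars ℝ).toContinuousLinearMap
  refine ((mulVecCLM.hasFDerivAt.comp x hF).sub_const y).congr_fderiv ?_
  ext1 v
  exact mulVec_mulVec _ B J

theorem sum_inner_realMulVecCLM (A : Matrix m n ℂ) (r : m → ℂ) (v : n → ℝ) :
    ∑ i, inner ℝ (r i) (realMulVecCLM A v i) = ∑ j, ((Aᴴ *ᵥ r) j).re * v j :=
  calc ∑ i, inner ℝ (r i) (realMulVecCLM A v i)
      = (star r ⬝ᵥ A *ᵥ fun j => (v j : ℂ)).re := by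
        simp only [realMulVecCLM_apply, Complex.inner, dotProduct, Complex.re_sum, Pi.star_apply,
          RCLike.star_def, mul_comm]
    _ = (star (Aᴴ *ᵥ r) ⬝ᵥ fun j => (v j : ℂ)).re := by
        rw [dotProduct_mulVec, star_mulVec, conjTranspose_conjTranspose]
    _ = ∑ j, ((Aᴴ *ᵥ r) j).re * v j := by
        simp only [dotProduct, Complex.re_sum, Complex.re_mul_ofReal, Pi.star_apply,
          RCLike.star_def, Complex.conj_re]

end RealMulVec

section Scattering

variable {N : ℕ} (G : Matrix (Fin N) (Fin N) ℂ) (uin : Fin N → ℂ) (f : Fin N → ℝ)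

theorem realMulVecCLM_jacH_apply (v : Fin N → ℝ) :
    realMulVecCLM (jacH G uin f) v =
      ((1 + diagC f * (1 - G * diagC f)⁻¹ * G) * diagC v * (1 - G * diagC f)⁻¹) *ᵥ uin := by
  have hswap : diagonal (totalField G uin f) *ᵥ (fun j => (v j : ℂ)) =
      diagC v *ᵥ totalField G uin f := by
    ext i
    simp only [diagC, mulVec_diagonal, mul_comm]
  rw [realMulVecCLM_apply, jacH, ← mulVec_mulVec, hswap, totalField, mulVec_mulVec, mulVec_mulVec,
    Matrix.mul_assoc]

-- Any norm making the matrices a complete normed algebra would do here.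
attribute [local instance] Matrix.linftyOpNormedRing Matrix.linftyOpNormedAlgebra

variable {G f} in
theorem hasFDerivAt_hMap (hinv : IsUnit (1 - G * diagC f)) :
    HasFDerivAt (hMap G uin) (realMulVecCLM (jacH G uin f)) f := by
  let diagCLM : (Fin N → ℝ) →L[ℝ] Matrix (Fin N) (Fin N) ℂ :=
    (diagonalLinearMap (Fin N) ℝ ℂ ∘ₗ
      Complex.ofRealCLM.toLinearMap.compLeft (Fin N)).toContinuousLinearMap
  let applyCLM : Matrix (Fin N) (Fin N) ℂ →L[ℝ] (Fin N → ℂ) :=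
    ((mulVecBilin ℝ ℂ).flip uin).toContinuousLinearMap
  have hcomp := applyCLM.hasFDerivAt.comp f
    ((hasFDerivAt_mul_inverse_one_sub_mul (𝕜 := ℝ) hinv).comp f diagCLM.hasFDerivAt)
  have hfun : hMap G uin = applyCLM ∘ (fun W => W * Ring.inverse (1 - G * W)) ∘ diagCLM := by
    ext1 g
    rw [hMap, totalField, mulVec_mulVec, nonsing_inv_eq_ringInverse]
    rfl
  rw [hfun]
  refine hcomp.congr_fderiv ?_
  ext1 v
  rw [realMulVecCLM_jacH_apply, nonsing_inv_eq_ringInverse]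
  rfl

end Scattering

theorem gradient_of_data_fidelity
    (N M : ℕ) (G : Matrix (Fin N) (Fin N) ℂ) (Gt : Matrix (Fin M) (Fin N) ℂ)
    (uin : Fin N → ℂ) (y : Fin M → ℂ)
    (f : Fin N → ℝ) (hinv : IsUnit (1 - G * diagC f)) :
    DifferentiableAt ℝ (dataFid G Gt uin y) f ∧
    ∀ v : Fin N → ℝ,
      fderiv ℝ (dataFid G Gt uin y) f v
        = ∑ n, (((jacH G uin f)ᴴ *ᵥ
              (Gtᴴ *ᵥ (Gt *ᵥ (diagC f *ᵥ totalField G uin f) - y))) n).re * v n := by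
  have hres := hasFDerivAt_mulVec_sub_const (hasFDerivAt_hMap uin hinv) Gt y
  have hD := hasFDerivAt_half_sum_norm_sq hres
  have hdata : dataFid G Gt uin y =
      fun g => (1 / 2) * ∑ m, ‖(Gt *ᵥ hMap G uin g - y) m‖ ^ 2 := by
    ext1 g
    simp only [dataFid, Complex.normSq_eq_norm_sq]
  rw [hdata]
  refine ⟨hD.differentiableAt, fun v => ?_⟩
  rw [hD.fderiv, mulVec_mulVec, ← conjTranspose_mul, ← hMap, ← sum_inner_realMulVecCLM]
  simp only [_root_.sum_apply, ContinuousLinearMap.comp_apply, innerSL_apply_apply,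
    ContinuousLinearMap.proj_apply]
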